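/- For a short exact sequence 0 → A → B → C → 0 in C and k ∈ ℕ₀, let ε^{-k} : S^{-k}T^{n+k}(C) → S^{-k+1}T^{n+k}(A) denote the connecting homomorphism between left satellite functors associated to this sequence. Then for every n ∈ ℤ the squares relating ε^{-k} and ε^{-k-1} over the transition morphisms S^{-k}δ̲^{n+k} commute, and the n-th connecting homomorphism of the satellite functor construction is given by δ̂^n = colim_{k ∈ ℕ} ε^{-k} : T̂^n(C) → T̂^{n+1}(A). In particular, δ̲^n : T^n → S^{-1}T^{n+1} is a natural transformation for every n ∈ ℤ. -/

import Mathlib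

open CategoryTheory Category Limits

universe v u v' u'

namespace Mislin

variable (C : Type u) [Category.{v} C] [Abelian C]
variable (D : Type u') [Category.{v'} D] [Abelian D]

/-- A cohomological functor `(T^•, δ^•) : C ⥤ D` (Axioms 2.1–2.2 of the paper):
a family of additive functors together with connecting homomorphisms, natural with respect
to morphisms of short exact sequences, inducing long exact sequences. -/
structure CohomFunctor where
  T : ℤ → C ⥤ D
  additive : ∀ n, (T n).Additive
  δ : ∀ {X : ShortComplex C}, X.ShortExact → ∀ n : ℤ, (T n).obj X.X₃ ⟶ (T (n + 1)).obj X.X₁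
  δ_natural : ∀ {X Y : ShortComplex C} (hX : X.ShortExact) (hY : Y.ShortExact)
    (φ : X ⟶ Y) (n : ℤ),
    (T n).map φ.τ₃ ≫ δ hY n = δ hX n ≫ (T (n + 1)).map φ.τ₁
  zero₁ : ∀ {X : ShortComplex C}, X.ShortExact → ∀ n : ℤ,
    (T n).map X.f ≫ (T n).map X.g = 0
  zero₂ : ∀ {X : ShortComplex C} (hX : X.ShortExact) (n : ℤ),
    (T n).map X.g ≫ δ hX n = 0
  zero₃ : ∀ {X : ShortComplex C} (hX : X.ShortExact) (n : ℤ),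
    δ hX n ≫ (T (n + 1)).map X.f = 0
  exact₁ : ∀ {X : ShortComplex C} (hX : X.ShortExact) (n : ℤ),
    (ShortComplex.mk ((T n).map X.f) ((T n).map X.g) (zero₁ hX n)).Exact
  exact₂ : ∀ {X : ShortComplex C} (hX : X.ShortExact) (n : ℤ),
    (ShortComplex.mk ((T n).map X.g) (δ hX n) (zero₂ hX n)).Exact
  exact₃ : ∀ {X : ShortComplex C} (hX : X.ShortExact) (n : ℤ),
    (ShortComplex.mk (δ hX n) ((T (n + 1)).map X.f) (zero₃ hX n)).Exact

variable {C D}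

/-- A morphism of cohomological functors (Axiom 2.3). -/
structure CohomHom (T U : CohomFunctor C D) where
  app : ∀ n : ℤ, T.T n ⟶ U.T n
  comm : ∀ {X : ShortComplex C} (hX : X.ShortExact) (n : ℤ),
    (app n).app X.X₃ ≫ U.δ hX n = T.δ hX n ≫ (app (n + 1)).app X.X₁

/-- Composition of morphisms of cohomological functors. -/
def CohomHom.comp {T U V : CohomFunctor C D} (f : CohomHom T U) (g : CohomHom U V) :
    CohomHom T V where
  app n := f.app n ≫ g.app n
  comm hX n := by
    simp only [NatTrans.comp_app, Category.assoc]
    rw [g.comm hX n, ← Category.assoc, f.comm hX n, Category.assoc]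

/-- A cohomological functor vanishes on projectives if `T^n(P) = 0` for all projective `P`
and all `n ∈ ℤ`. -/
def VanishesOnProjectives (T : CohomFunctor C D) : Prop :=
  ∀ (n : ℤ) (P : C), Projective P → IsZero ((T.T n).obj P)

/-- `(T̂^•, δ̂^•)` together with `ν : T^• → T̂^•` is a Mislin completion of `(T^•, δ^•)`
(Definition 2.4): it vanishes on projectives and every morphism to a cohomological functor
vanishing on projectives factors uniquely through `ν`. -/
structure IsMislinCompletion (T That : CohomFunctor C D) (ν : CohomHom T That) : Prop where
  vanishes : VanishesOnProjectives That
  factors : ∀ (U : CohomFunctor C D), VanishesOnProjectives U → ∀ φ : CohomHom T U,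
    ∃! ψ : CohomHom That U, ν.comp ψ = φ

/-- The elementary universal property for a colimit (direct limit) of an `ℕ`-indexed
direct system in `D`. -/
structure IsDirectLimit {X : ℕ → D} (f : ∀ k, X k ⟶ X (k + 1)) (L : D)
    (ι : ∀ k, X k ⟶ L) : Prop where
  comm : ∀ k, f k ≫ ι (k + 1) = ι k
  desc : ∀ (Z : D) (g : ∀ k, X k ⟶ Z), (∀ k, f k ≫ g (k + 1) = g k) →
    ∃! u : L ⟶ Z, ∀ k, ι k ≫ u = g k

/-- An abstract system of left satellite functors `S^{-k}T^n` of a cohomological functor `T`,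
in the sense of Cartan–Eilenberg, together with the connecting homomorphisms `ε`, the
factorisation `δ̲` of `δ` through the first left satellite, and its satellites `S^{-k}δ̲`.
Here `S k n` plays the role of `S^{-k}T^n`. -/
structure SatelliteSystem (T : CohomFunctor C D) where
  S : ℕ → ℤ → C ⥤ D
  additive : ∀ k n, (S k n).Additive
  S_zero : ∀ n, S 0 n = T.T n
  /-- connecting homomorphisms of satellite functors, `ε^{-k-1} : S^{-k-1}T^n(X₃) ⟶ S^{-k}T^n(X₁)`. -/
  ε : ∀ {X : ShortComplex C}, X.ShortExact → ∀ (k : ℕ) (n : ℤ),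
    (S (k + 1) n).obj X.X₃ ⟶ (S k n).obj X.X₁
  ε_natural : ∀ {X Y : ShortComplex C} (hX : X.ShortExact) (hY : Y.ShortExact)
    (φ : X ⟶ Y) (k : ℕ) (n : ℤ),
    (S (k + 1) n).map φ.τ₃ ≫ ε hY k n = ε hX k n ≫ (S k n).map φ.τ₁
  /-- higher left satellite functors vanish on projective objects. -/
  vanish : ∀ (k : ℕ) (n : ℤ) (P : C), Projective P → IsZero ((S (k + 1) n).obj P)
  sz₁ : ∀ {X : ShortComplex C}, X.ShortExact → ∀ (k : ℕ) (n : ℤ),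
    (S k n).map X.f ≫ (S k n).map X.g = 0
  sz₂ : ∀ {X : ShortComplex C} (hX : X.ShortExact) (k : ℕ) (n : ℤ),
    (S (k + 1) n).map X.g ≫ ε hX k n = 0
  sz₃ : ∀ {X : ShortComplex C} (hX : X.ShortExact) (k : ℕ) (n : ℤ),
    ε hX k n ≫ (S k n).map X.f = 0
  sexact₁ : ∀ {X : ShortComplex C} (hX : X.ShortExact) (k : ℕ) (n : ℤ),
    (ShortComplex.mk ((S k n).map X.f) ((S k n).map X.g) (sz₁ hX k n)).Exact
  sexact₂ : ∀ {X : ShortComplex C} (hX : X.ShortExact) (k : ℕ) (n : ℤ),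
    (ShortComplex.mk ((S (k + 1) n).map X.g) (ε hX k n) (sz₂ hX k n)).Exact
  sexact₃ : ∀ {X : ShortComplex C} (hX : X.ShortExact) (k : ℕ) (n : ℤ),
    (ShortComplex.mk (ε hX k n) ((S k n).map X.f) (sz₃ hX k n)).Exact
  /-- the natural transformations `S^{-k}δ̲^n : S^{-k}T^n → S^{-k-1}T^{n+1}`. -/
  Sδbar : ∀ (k : ℕ) (n : ℤ), S k n ⟶ S (k + 1) (n + 1)
  /-- `δ^n` factors as `δ̲^n` followed by `ε^{-1}` (Diagram 3.4 of the paper). -/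
  δ_fac : ∀ {X : ShortComplex C} (hX : X.ShortExact) (n : ℤ),
    T.δ hX n =
      eqToHom (congrArg (fun F : C ⥤ D => F.obj X.X₃) (S_zero n).symm) ≫
        (Sδbar 0 n).app X.X₃ ≫ ε hX 0 (n + 1) ≫
          eqToHom (congrArg (fun F : C ⥤ D => F.obj X.X₁) (S_zero (n + 1)))
  /-- the defining compatibility of `S^{-k-1}δ̲` with `S^{-k}δ̲` over the kernel
  monomorphisms `ε`, for short exact sequences with projective middle term. -/
  Sδbar_proj : ∀ {X : ShortComplex C} (hX : X.ShortExact), Projective X.X₂ →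
    ∀ (k : ℕ) (n : ℤ),
    (Sδbar (k + 1) n).app X.X₃ ≫ ε hX (k + 1) (n + 1) =
      ε hX k n ≫ (Sδbar k n).app X.X₁

theorem cast_step (n : ℤ) (k : ℕ) : n + (k : ℤ) + 1 = n + ((k + 1 : ℕ) : ℤ) := by
  push_cast; ring

/-- The `k`-th term `S^{-k}T^{n+k}(M)` of the direct system of the satellite functor
construction. -/
def SatelliteSystem.obj {T : CohomFunctor C D} (SS : SatelliteSystem T) (n : ℤ) (M : C)
    (k : ℕ) : D :=
  (SS.S k (n + (k : ℤ))).obj M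

/-- The transition morphism `S^{-k}δ̲^{n+k} : S^{-k}T^{n+k}(M) ⟶ S^{-k-1}T^{n+k+1}(M)` of the
direct system of the satellite functor construction. -/
def SatelliteSystem.map {T : CohomFunctor C D} (SS : SatelliteSystem T) (n : ℤ) (M : C)
    (k : ℕ) : SS.obj n M k ⟶ SS.obj n M (k + 1) :=
  (SS.Sδbar k (n + (k : ℤ))).app M ≫
    eqToHom (congrArg (fun m : ℤ => (SS.S (k + 1) m).obj M) (cast_step n k))

theorem obj_zero_eq {T : CohomFunctor C D} (SS : SatelliteSystem T) (n : ℤ) (M : C) :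
    (T.T n).obj M = SS.obj n M 0 := by
  show (T.T n).obj M = (SS.S 0 (n + ((0 : ℕ) : ℤ))).obj M
  rw [SS.S_zero]
  norm_num


section Helpers

/-! ### Exactness of sequential colimits -/

lemma exact_of_evaluation (S : ShortComplex (ℕ ⥤ D))
    (h : ∀ j, (S.map ((evaluation ℕ D).obj j)).Exact) : S.Exact := by
  rw [ShortComplex.exact_iff_isZero_homology]
  apply Functor.isZero
  intro j
  have hj := h j
  rw [ShortComplex.exact_iff_isZero_homology] at hj
  exact hj.of_iso (S.mapHomologyIso ((evaluation ℕ D).obj j)).symm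

/-- The cocone associated with a compatible family of morphisms. -/
def seqCocone {X : ℕ → D} (f : ∀ k, X k ⟶ X (k + 1)) (L : D)
    (i : ∀ k, X k ⟶ L) (h : ∀ k, f k ≫ i (k + 1) = i k) : Cocone (Functor.ofSequence f) where
  pt := L
  ι := NatTrans.ofSequence (F := Functor.ofSequence f) (G := (Functor.const ℕ).obj L)
    (fun k => i k) (fun k =>
      (congrArg (fun t : X k ⟶ X (k + 1) => t ≫ i (k + 1))
        (Functor.ofSequence_map_homOfLE_succ f k)).trans
        ((h k).trans (Category.comp_id (i k)).symm))

lemma IsDirectLimit.nonempty_isColimit {X : ℕ → D} {f : ∀ k, X k ⟶ X (k + 1)} {L : D}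
    {i : ∀ k, X k ⟶ L} (h : IsDirectLimit f L i) :
    Nonempty (IsColimit (seqCocone f L i h.comm)) := by
  have w : ∀ (s : Cocone (Functor.ofSequence f)) (k : ℕ),
      f k ≫ s.ι.app (k + 1) = s.ι.app k := fun s k =>
    (congrArg (fun t : X k ⟶ X (k + 1) => t ≫ s.ι.app (k + 1))
      (Functor.ofSequence_map_homOfLE_succ f k)).symm.trans (s.w (homOfLE (Nat.le_add_right k 1)))
  exact ⟨{
    desc := fun s => (h.desc s.pt (fun k => s.ι.app k) (w s)).choose
    fac := fun s k => (h.desc s.pt (fun k => s.ι.app k) (w s)).choose_spec.1 k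
    uniq := fun s m hm => (h.desc s.pt (fun k => s.ι.app k) (w s)).choose_spec.2 m hm }⟩

lemma IsDirectLimit.shift {X : ℕ → D} {f : ∀ k, X k ⟶ X (k + 1)} {L : D}
    {i : ∀ k, X k ⟶ L} (h : IsDirectLimit f L i) :
    IsDirectLimit (X := fun k => X (k + 1)) (fun k => f (k + 1)) L (fun k => i (k + 1)) where
  comm k := h.comm (k + 1)
  desc Z g hg := by
    obtain ⟨u, hu, hu'⟩ := h.desc Z (fun k => f k ≫ g k) (fun k => by rw [hg])
    refine ⟨u, fun k => ?_, fun v hv => hu' v fun k => ?_⟩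
    · rw [hu, hg]
    · rw [← h.comm k, Category.assoc]
      exact congrArg (fun t => f k ≫ t) (hv k)

lemma exact_of_isDirectLimit [HasColimitsOfShape ℕ D]
    [PreservesFiniteLimits (colim : (ℕ ⥤ D) ⥤ D)]
    {X Y Z : ℕ → D} {fX : ∀ k, X k ⟶ X (k + 1)} {fY : ∀ k, Y k ⟶ Y (k + 1)}
    {fZ : ∀ k, Z k ⟶ Z (k + 1)} {LX LY LZ : D}
    {iX : ∀ k, X k ⟶ LX} {iY : ∀ k, Y k ⟶ LY} {iZ : ∀ k, Z k ⟶ LZ}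
    (hX : IsDirectLimit fX LX iX) (hY : IsDirectLimit fY LY iY) (hZ : IsDirectLimit fZ LZ iZ)
    (a : ∀ k, X k ⟶ Y k) (b : ∀ k, Y k ⟶ Z k)
    (ha : ∀ k, fX k ≫ a (k + 1) = a k ≫ fY k) (hb : ∀ k, fY k ≫ b (k + 1) = b k ≫ fZ k)
    (w : ∀ k, a k ≫ b k = 0) (ex : ∀ k, (ShortComplex.mk (a k) (b k) (w k)).Exact)
    (α : LX ⟶ LY) (β : LY ⟶ LZ) (hα : ∀ k, iX k ≫ α = a k ≫ iY k)
    (hβ : ∀ k, iY k ≫ β = b k ≫ iZ k) (w' : α ≫ β = 0) :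
    (ShortComplex.mk α β w').Exact := by
  have : HasExactColimitsOfShape ℕ D := ⟨inferInstance⟩
  obtain ⟨cX⟩ := hX.nonempty_isColimit
  obtain ⟨cY⟩ := hY.nonempty_isColimit
  obtain ⟨cZ⟩ := hZ.nonempty_isColimit
  let S : ShortComplex (ℕ ⥤ D) := ShortComplex.mk
    (NatTrans.ofSequence (F := Functor.ofSequence fX) (G := Functor.ofSequence fY) a
      (fun k => (congrArg (fun t : X k ⟶ X (k + 1) => t ≫ a (k + 1))
        (Functor.ofSequence_map_homOfLE_succ fX k)).trans ((ha k).trans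
        (congrArg (fun t : Y k ⟶ Y (k + 1) => a k ≫ t)
        (Functor.ofSequence_map_homOfLE_succ fY k)).symm)))
    (NatTrans.ofSequence (F := Functor.ofSequence fY) (G := Functor.ofSequence fZ) b
      (fun k => (congrArg (fun t : Y k ⟶ Y (k + 1) => t ≫ b (k + 1))
        (Functor.ofSequence_map_homOfLE_succ fY k)).trans ((hb k).trans
        (congrArg (fun t : Z k ⟶ Z (k + 1) => b k ≫ t)
        (Functor.ofSequence_map_homOfLE_succ fZ k)).symm)))
    (by
      ext k
      exact w k)
  have hS : S.Exact := exact_of_evaluation S (fun k => ex k)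
  exact colim.exact_mapShortComplex (S := S) hS cX cY cZ α β hα hβ

variable {T : CohomFunctor C D}

/-! ### Projective presentations -/

/-- The chosen projective presentation of an object. -/
noncomputable abbrev pres [EnoughProjectives C] (M : C) : ShortComplex C :=
  ShortComplex.mk (kernel.ι (Projective.π M)) (Projective.π M) (kernel.condition _)

lemma pres_shortExact [EnoughProjectives C] (M : C) : (pres M).ShortExact where
  exact := ShortComplex.exact_of_f_is_kernel _ (kernelIsKernel (Projective.π M))
  mono_f := by dsimp [pres]; infer_instance
  epi_g := by dsimp [pres]; infer_instance

instance pres_projective [EnoughProjectives C] (M : C) : Projective (pres M).X₂ :=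
  Projective.projective_over M

/-- Lift a morphism from the right-hand end of a short exact sequence with projective
middle term. -/
lemma exists_lift {Y X : ShortComplex C} (_ : Y.ShortExact) (hX : X.ShortExact)
    [Projective Y.X₂] (f : Y.X₃ ⟶ X.X₃) : ∃ φ : Y ⟶ X, φ.τ₃ = f := by
  have := hX.epi_g
  have := hX.mono_f
  let h : Y.X₂ ⟶ X.X₂ := Projective.factorThru (Y.g ≫ f) X.g
  have hh : h ≫ X.g = Y.g ≫ f := Projective.factorThru_comp _ _
  have hz : (Y.f ≫ h) ≫ X.g = 0 := by rw [Category.assoc, hh, ← Category.assoc, Y.zero, zero_comp]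
  exact ⟨{ τ₁ := hX.exact.lift (Y.f ≫ h) hz
           τ₂ := h
           τ₃ := f
           comm₁₂ := hX.exact.lift_f _ _
           comm₂₃ := hh }, rfl⟩

lemma Sδbar_ε [EnoughProjectives C] (SS : SatelliteSystem T) {X : ShortComplex C}
    (hX : X.ShortExact) (k : ℕ) (m : ℤ) :
    (SS.Sδbar (k + 1) m).app X.X₃ ≫ SS.ε hX (k + 1) (m + 1) =
        SS.ε hX k m ≫ (SS.Sδbar k m).app X.X₁ := by
  obtain ⟨φ, hφ⟩ := exists_lift (pres_shortExact X.X₃) hX (𝟙 X.X₃)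
  have e : ∀ k m, SS.ε hX k m = SS.ε (pres_shortExact X.X₃) k m ≫ (SS.S k m).map φ.τ₁ := by
    intro k m
    rw [← SS.ε_natural (pres_shortExact X.X₃) hX φ k m, hφ]
    rw [CategoryTheory.Functor.map_id, Category.id_comp]
  rw [e, e, Category.assoc, (SS.Sδbar k m).naturality, ← Category.assoc, ← Category.assoc]
  congr 1
  exact SS.Sδbar_proj (pres_shortExact X.X₃) inferInstance k m

/-! ### The satellite functor construction -/

section Construction

variable [HasColimitsOfShape ℕ D] (SS : SatelliteSystem T)

lemma S_map_eqToHom (k : ℕ) {m m' : ℤ} (h : m = m') {M N : C} (f : M ⟶ N) :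
    (SS.S k m).map f ≫ eqToHom (congrArg (fun m : ℤ => (SS.S k m).obj N) h) =
      eqToHom (congrArg (fun m : ℤ => (SS.S k m).obj M) h) ≫ (SS.S k m').map f := by
  subst h; simp

lemma SSmap_natural (n : ℤ) {M N : C} (f : M ⟶ N) (k : ℕ) :
    SS.map n M k ≫ (SS.S (k + 1) (n + ((k + 1 : ℕ) : ℤ))).map f =
      (SS.S k (n + (k : ℤ))).map f ≫ SS.map n N k := by
  dsimp only [SatelliteSystem.map, SatelliteSystem.obj]
  rw [← Category.assoc, (SS.Sδbar k (n + k)).naturality, Category.assoc, Category.assoc,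
    S_map_eqToHom SS (k + 1) (cast_step n k) f]

/-- The direct system defining the satellite functor construction. -/
def seq (n : ℤ) (M : C) : ℕ ⥤ D := Functor.ofSequence (SS.map n M)

/-- Functoriality of the direct system. -/
def seqMap (n : ℤ) {M N : C} (f : M ⟶ N) : seq SS n M ⟶ seq SS n N :=
  NatTrans.ofSequence (F := seq SS n M) (G := seq SS n N)
    (fun k => (SS.S k (n + (k : ℤ))).map f) (fun k => by
      dsimp only [seq]
      rw [Functor.ofSequence_map_homOfLE_succ, Functor.ofSequence_map_homOfLE_succ]
      exact SSmap_natural SS n f k)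

/-- The satellite functor construction in degree `n`. -/
noncomputable def hatT (n : ℤ) : C ⥤ D where
  obj M := colimit (seq SS n M)
  map f := colimMap (seqMap SS n f)
  map_id M := by
    apply colimit.hom_ext
    intro k
    rw [ι_colimMap, Category.comp_id]
    change (SS.S k (n + (k : ℤ))).map (𝟙 M) ≫ _ = _
    rw [CategoryTheory.Functor.map_id]
    exact Category.id_comp _
  map_comp f g := by
    apply colimit.hom_ext
    intro k
    rw [ι_colimMap, ← Category.assoc, ι_colimMap, Category.assoc, ι_colimMap, ← Category.assoc]
    congr 1
    exact (SS.S k (n + (k : ℤ))).map_comp f g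

/-- The structure morphisms of the colimit. -/
noncomputable def hatι₀ (n : ℤ) (M : C) (k : ℕ) :
    (SS.S k (n + (k : ℤ))).obj M ⟶ (hatT SS n).obj M :=
  colimit.ι (seq SS n M) k

lemma map_hatι₀ (n : ℤ) (M : C) (k : ℕ) :
    (SS.Sδbar k (n + (k : ℤ))).app M ≫
      eqToHom (congrArg (fun m : ℤ => (SS.S (k + 1) m).obj M) (cast_step n k)) ≫
      hatι₀ SS n M (k + 1) = hatι₀ SS n M k := by
  rw [← Category.assoc]
  exact (congrArg (fun t : SS.obj n M k ⟶ SS.obj n M (k + 1) => t ≫ hatι₀ SS n M (k + 1))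
    (Functor.ofSequence_map_homOfLE_succ (SS.map n M) k)).symm.trans
    (colimit.w (seq SS n M) (homOfLE (Nat.le_add_right k 1)))

/-- The structure morphisms of the colimit, with flexible indices. -/
noncomputable def hatι (n : ℤ) (M : C) (k : ℕ) (m : ℤ) (h : m = n + (k : ℤ)) :
    (SS.S k m).obj M ⟶ (hatT SS n).obj M :=
  eqToHom (congrArg (fun m : ℤ => (SS.S k m).obj M) h) ≫ hatι₀ SS n M k

lemma hatι_rfl (n : ℤ) (M : C) (k : ℕ) :
    hatι SS n M k (n + (k : ℤ)) rfl = hatι₀ SS n M k := by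
  dsimp only [hatι]
  rw [eqToHom_refl, Category.id_comp]

lemma eqToHom_hatι (n : ℤ) (M : C) (k : ℕ) {m m' : ℤ} (e : m' = m) (h : m = n + (k : ℤ))
    (p : (SS.S k m').obj M = (SS.S k m).obj M) :
    eqToHom p ≫ hatι SS n M k m h = hatι SS n M k m' (e.trans h) := by
  subst e; simp

lemma Sδbar_hatι (n : ℤ) (M : C) (k : ℕ) (m : ℤ) (h : m = n + (k : ℤ))
    (h' : m + 1 = n + ((k + 1 : ℕ) : ℤ)) :
    (SS.Sδbar k m).app M ≫ hatι SS n M (k + 1) (m + 1) h' = hatι SS n M k m h := by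
  subst h
  rw [hatι_rfl]
  exact map_hatι₀ SS n M k

lemma hatι_natural (n : ℤ) {M N : C} (f : M ⟶ N) (k : ℕ) (m : ℤ) (h : m = n + (k : ℤ)) :
    hatι SS n M k m h ≫ (hatT SS n).map f = (SS.S k m).map f ≫ hatι SS n N k m h := by
  subst h
  rw [hatι_rfl, hatι_rfl]
  exact ι_colimMap (seqMap SS n f) k

lemma hat_ext {n : ℤ} {M : C} {Z : D} {u v : (hatT SS n).obj M ⟶ Z}
    (h : ∀ (k : ℕ) (m : ℤ) (e : m = n + (k : ℤ)),
      hatι SS n M k m e ≫ u = hatι SS n M k m e ≫ v) : u = v := by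
  apply colimit.hom_ext
  intro k
  have := h k _ rfl
  rw [hatι_rfl] at this
  exact this

lemma hat_ext_succ {n : ℤ} {M : C} {Z : D} {u v : (hatT SS n).obj M ⟶ Z}
    (h : ∀ (k : ℕ) (m : ℤ) (e : m = n + ((k + 1 : ℕ) : ℤ)),
      hatι SS n M (k + 1) m e ≫ u = hatι SS n M (k + 1) m e ≫ v) : u = v := by
  apply hat_ext
  intro k m e
  have e' : m + 1 = n + ((k + 1 : ℕ) : ℤ) := by subst e; exact cast_step n k
  rw [← Sδbar_hatι SS n M k m e e', Category.assoc, Category.assoc, h]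

lemma exists_hat_desc {n : ℤ} {M : C} {Z : D}
    (g : ∀ (k : ℕ) (m : ℤ), m = n + (k : ℤ) → ((SS.S k m).obj M ⟶ Z))
    (hg : ∀ (k : ℕ) (m : ℤ) (h : m = n + (k : ℤ)) (h' : m + 1 = n + ((k + 1 : ℕ) : ℤ)),
      (SS.Sδbar k m).app M ≫ g (k + 1) (m + 1) h' = g k m h) :
    ∃ u : (hatT SS n).obj M ⟶ Z, ∀ (k : ℕ) (m : ℤ) (h : m = n + (k : ℤ)),
      hatι SS n M k m h ≫ u = g k m h := by
  have aux : ∀ (k : ℕ) (m m' : ℤ) (e : m' = m) (h : m = n + (k : ℤ))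
      (p : (SS.S k m').obj M = (SS.S k m).obj M),
      eqToHom p ≫ g k m h = g k m' (e.trans h) := by
    intro k m m' e h p
    subst e; simp
  have w : ∀ k : ℕ, SS.map n M k ≫ g (k + 1) (n + ((k + 1 : ℕ) : ℤ)) rfl =
      g k (n + (k : ℤ)) rfl := by
    intro k
    dsimp only [SatelliteSystem.map]
    rw [← hg k _ rfl (cast_step n k), ← aux (k + 1) _ _ (cast_step n k) rfl
      (congrArg (fun m : ℤ => (SS.S (k + 1) m).obj M) (cast_step n k))]
    exact Category.assoc _ _ _
  refine ⟨colimit.desc (seq SS n M) (seqCocone (SS.map n M) Z (fun k => g k _ rfl) w), ?_⟩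
  intro k m h
  subst h
  rw [hatι_rfl]
  exact colimit.ι_desc _ _

/-- Descent from the satellite functor construction. -/
noncomputable def hatDesc {n : ℤ} {M : C} {Z : D}
    (g : ∀ (k : ℕ) (m : ℤ), m = n + (k : ℤ) → ((SS.S k m).obj M ⟶ Z))
    (hg : ∀ (k : ℕ) (m : ℤ) (h : m = n + (k : ℤ)) (h' : m + 1 = n + ((k + 1 : ℕ) : ℤ)),
      (SS.Sδbar k m).app M ≫ g (k + 1) (m + 1) h' = g k m h) :
    (hatT SS n).obj M ⟶ Z := (exists_hat_desc SS g hg).choose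

lemma hatι_desc {n : ℤ} {M : C} {Z : D}
    (g : ∀ (k : ℕ) (m : ℤ), m = n + (k : ℤ) → ((SS.S k m).obj M ⟶ Z))
    (hg : ∀ (k : ℕ) (m : ℤ) (h : m = n + (k : ℤ)) (h' : m + 1 = n + ((k + 1 : ℕ) : ℤ)),
      (SS.Sδbar k m).app M ≫ g (k + 1) (m + 1) h' = g k m h)
    (k : ℕ) (m : ℤ) (h : m = n + (k : ℤ)) :
    hatι SS n M k m h ≫ hatDesc SS g hg = g k m h :=
  (exists_hat_desc SS g hg).choose_spec k m h

lemma hat_isDirectLimit (n : ℤ) (M : C) :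
    IsDirectLimit (SS.map n M) ((hatT SS n).obj M)
      (fun k => hatι SS n M k (n + (k : ℤ)) rfl) where
  comm k := by
    dsimp only [SatelliteSystem.map]
    rw [← Sδbar_hatι SS n M k _ rfl (cast_step n k), ← eqToHom_hatι SS n M (k + 1)
      (cast_step n k) rfl (congrArg (fun m : ℤ => (SS.S (k + 1) m).obj M) (cast_step n k))]
    exact Category.assoc _ _ _
  desc Z g hg := by
    have w : ∀ k, SS.map n M k ≫ g (k + 1) = g k := hg
    have fac : ∀ k, colimit.ι (seq SS n M) k ≫ colimit.desc (seq SS n M)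
        (seqCocone (SS.map n M) Z g w) = g k := fun k => colimit.ι_desc _ _
    have hι : ∀ k, hatι SS n M k (n + (k : ℤ)) rfl = hatι₀ SS n M k := hatι_rfl SS n M
    refine ⟨colimit.desc (seq SS n M) (seqCocone (SS.map n M) Z g w), fun k => ?_,
      fun v hv => ?_⟩
    · change hatι SS n M k (n + (k : ℤ)) rfl ≫ _ = _
      rw [hι]
      exact fac k
    · apply colimit.hom_ext
      intro k
      have := hv k
      change hatι SS n M k (n + (k : ℤ)) rfl ≫ _ = _ at this
      rw [hι] at this
      exact this.trans (fac k).symm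

instance hatT_additive (n : ℤ) : (hatT SS n).Additive where
  map_add {M N f g} := by
    apply hat_ext
    intro k m e
    have := SS.additive k m
    rw [Preadditive.comp_add, hatι_natural, hatι_natural, hatι_natural, Functor.map_add,
      Preadditive.add_comp]

lemma idx_succ {m n : ℤ} {k : ℕ} (h : m = n + (k : ℤ)) : m + 1 = (n + 1) + (k : ℤ) := by
  omega

lemma idx_shift {m n : ℤ} {k : ℕ} (h : m = n + ((k + 1 : ℕ) : ℤ)) :
    m = (n + 1) + (k : ℤ) := by
  push_cast at h; omega

variable [EnoughProjectives C]

/-- The connecting homomorphism of the satellite functor construction. -/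
noncomputable def hatδ {X : ShortComplex C} (hX : X.ShortExact) (n : ℤ) :
    (hatT SS n).obj X.X₃ ⟶ (hatT SS (n + 1)).obj X.X₁ :=
  hatDesc SS (fun k m h => (SS.Sδbar k m).app X.X₃ ≫ SS.ε hX k (m + 1) ≫
    hatι SS (n + 1) X.X₁ k (m + 1) (idx_succ h)) (fun k m h h' => by
      rw [← Category.assoc ((SS.Sδbar (k + 1) (m + 1)).app X.X₃), Sδbar_ε SS hX k (m + 1),
        Category.assoc, Sδbar_hatι])

lemma hatι_hatδ {X : ShortComplex C} (hX : X.ShortExact) (n : ℤ) (k : ℕ) (m : ℤ)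
    (h : m = n + ((k + 1 : ℕ) : ℤ)) :
    hatι SS n X.X₃ (k + 1) m h ≫ hatδ SS hX n =
      SS.ε hX k m ≫ hatι SS (n + 1) X.X₁ k m (idx_shift h) := by
  dsimp only [hatδ]
  rw [hatι_desc, ← Category.assoc, Sδbar_ε SS hX k m, Category.assoc, Sδbar_hatι]

lemma hat_zero₁ {X : ShortComplex C} (n : ℤ) :
    (hatT SS n).map X.f ≫ (hatT SS n).map X.g = 0 := by
  rw [← Functor.map_comp, X.zero, Functor.map_zero]

lemma hat_zero₂ {X : ShortComplex C} (hX : X.ShortExact) (n : ℤ) :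
    (hatT SS n).map X.g ≫ hatδ SS hX n = 0 := by
  apply hat_ext_succ
  intro k m e
  rw [← Category.assoc, hatι_natural, Category.assoc, hatι_hatδ, ← Category.assoc, SS.sz₂,
    zero_comp, comp_zero]

lemma hat_zero₃ {X : ShortComplex C} (hX : X.ShortExact) (n : ℤ) :
    hatδ SS hX n ≫ (hatT SS (n + 1)).map X.f = 0 := by
  apply hat_ext_succ
  intro k m e
  rw [← Category.assoc, hatι_hatδ, Category.assoc, hatι_natural, ← Category.assoc, SS.sz₃,
    zero_comp, comp_zero]

/-- The levelwise connecting homomorphism with shifted index. -/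
def εs {X : ShortComplex C} (hX : X.ShortExact) (k : ℕ) {m m' : ℤ} (h : m = m') :
    (SS.S (k + 1) m).obj X.X₃ ⟶ (SS.S k m').obj X.X₁ :=
  SS.ε hX k m ≫ eqToHom (congrArg (fun m : ℤ => (SS.S k m).obj X.X₁) h)

lemma εs_zero₂ {X : ShortComplex C} (hX : X.ShortExact) (k : ℕ) {m m' : ℤ} (h : m = m') :
    (SS.S (k + 1) m).map X.g ≫ εs SS hX k h = 0 := by
  subst h
  simpa [εs] using SS.sz₂ hX k m

lemma εs_zero₃ {X : ShortComplex C} (hX : X.ShortExact) (k : ℕ) {m m' : ℤ} (h : m = m') :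
    εs SS hX k h ≫ (SS.S k m').map X.f = 0 := by
  subst h
  simpa [εs] using SS.sz₃ hX k m

lemma εs_exact₂ {X : ShortComplex C} (hX : X.ShortExact) (k : ℕ) {m m' : ℤ} (h : m = m') :
    (ShortComplex.mk _ _ (εs_zero₂ SS hX k h)).Exact := by
  subst h
  have := SS.sexact₂ hX k m
  have e : εs SS hX k (rfl : m = m) = SS.ε hX k m := by simp [εs]
  simpa only [e] using this

lemma εs_exact₃ {X : ShortComplex C} (hX : X.ShortExact) (k : ℕ) {m m' : ℤ} (h : m = m') :
    (ShortComplex.mk _ _ (εs_zero₃ SS hX k h)).Exact := by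
  subst h
  have := SS.sexact₃ hX k m
  have e : εs SS hX k (rfl : m = m) = SS.ε hX k m := by simp [εs]
  simpa only [e] using this

lemma εs_comm {X : ShortComplex C} (hX : X.ShortExact) (k : ℕ) {a b c d : ℤ}
    (h₁ : a + 1 = b) (h₂ : a = c) (h₃ : b = d) (h₄ : c + 1 = d) :
    ((SS.Sδbar (k + 1) a).app X.X₃ ≫
      eqToHom (congrArg (fun m : ℤ => (SS.S (k + 1 + 1) m).obj X.X₃) h₁)) ≫
      εs SS hX (k + 1) h₃ =
    εs SS hX k h₂ ≫ (SS.Sδbar k c).app X.X₁ ≫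
      eqToHom (congrArg (fun m : ℤ => (SS.S (k + 1) m).obj X.X₁) h₄) := by
  subst h₂; subst h₁; subst h₃
  simpa [εs] using Sδbar_ε SS hX k a

lemma idx_eq (n : ℤ) (k : ℕ) : n + ((k + 1 : ℕ) : ℤ) = (n + 1) + (k : ℤ) := by
  push_cast; ring

lemma hatι₀_hatδ {X : ShortComplex C} (hX : X.ShortExact) (n : ℤ) (k : ℕ) :
    hatι SS n X.X₃ (k + 1) _ rfl ≫ hatδ SS hX n =
      εs SS hX k (idx_eq n k) ≫ hatι SS (n + 1) X.X₁ k _ rfl := by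
  rw [hatι_hatδ]
  dsimp only [εs]
  rw [Category.assoc, eqToHom_hatι SS (n + 1) X.X₁ k (idx_eq n k)]

variable [PreservesFiniteLimits (colim : (ℕ ⥤ D) ⥤ D)]

lemma hat_exact₁ {X : ShortComplex C} (hX : X.ShortExact) (n : ℤ) :
    (ShortComplex.mk _ _ (hat_zero₁ SS (X := X) n)).Exact :=
  exact_of_isDirectLimit (hat_isDirectLimit SS n X.X₁) (hat_isDirectLimit SS n X.X₂)
    (hat_isDirectLimit SS n X.X₃)
    (fun k => (SS.S k (n + (k : ℤ))).map X.f) (fun k => (SS.S k (n + (k : ℤ))).map X.g)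
    (fun k => SSmap_natural SS n X.f k) (fun k => SSmap_natural SS n X.g k)
    (fun k => SS.sz₁ hX k _) (fun k => SS.sexact₁ hX k _) _ _
    (fun k => hatι_natural SS n X.f k _ rfl) (fun k => hatι_natural SS n X.g k _ rfl) _

lemma hat_exact₂ {X : ShortComplex C} (hX : X.ShortExact) (n : ℤ) :
    (ShortComplex.mk _ _ (hat_zero₂ SS hX n)).Exact :=
  exact_of_isDirectLimit (hat_isDirectLimit SS n X.X₂).shift (hat_isDirectLimit SS n X.X₃).shift
    (hat_isDirectLimit SS (n + 1) X.X₁)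
    (fun k => (SS.S (k + 1) (n + ((k + 1 : ℕ) : ℤ))).map X.g)
    (fun k => εs SS hX k (idx_eq n k))
    (fun k => SSmap_natural SS n X.g (k + 1))
    (fun k => εs_comm SS hX k (cast_step n (k + 1)) (idx_eq n k) (idx_eq n (k + 1))
      (cast_step (n + 1) k))
    (fun k => εs_zero₂ SS hX k _) (fun k => εs_exact₂ SS hX k _) _ _
    (fun k => hatι_natural SS n X.g (k + 1) _ rfl) (fun k => hatι₀_hatδ SS hX n k) _

lemma hat_exact₃ {X : ShortComplex C} (hX : X.ShortExact) (n : ℤ) :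
    (ShortComplex.mk _ _ (hat_zero₃ SS hX n)).Exact :=
  exact_of_isDirectLimit (hat_isDirectLimit SS n X.X₃).shift
    (hat_isDirectLimit SS (n + 1) X.X₁) (hat_isDirectLimit SS (n + 1) X.X₂)
    (fun k => εs SS hX k (idx_eq n k))
    (fun k => (SS.S k (n + 1 + (k : ℤ))).map X.f)
    (fun k => εs_comm SS hX k (cast_step n (k + 1)) (idx_eq n k) (idx_eq n (k + 1))
      (cast_step (n + 1) k))
    (fun k => SSmap_natural SS (n + 1) X.f k)
    (fun k => εs_zero₃ SS hX k _) (fun k => εs_exact₃ SS hX k _) _ _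
    (fun k => hatι₀_hatδ SS hX n k) (fun k => hatι_natural SS (n + 1) X.f k _ rfl) _

/-- The satellite functor construction as a cohomological functor. -/
noncomputable abbrev hat : CohomFunctor C D where
  T := hatT SS
  additive n := inferInstance
  δ hX n := hatδ SS hX n
  δ_natural {X Y} hX hY φ n := by
    apply hat_ext_succ
    intro k m e
    rw [← Category.assoc, hatι_natural, Category.assoc, hatι_hatδ, ← Category.assoc,
      SS.ε_natural hX hY φ, ← Category.assoc, hatι_hatδ, Category.assoc, Category.assoc,
      hatι_natural]
  zero₁ _ n := hat_zero₁ SS n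
  zero₂ hX n := hat_zero₂ SS hX n
  zero₃ hX n := hat_zero₃ SS hX n
  exact₁ hX n := hat_exact₁ SS hX n
  exact₂ hX n := hat_exact₂ SS hX n
  exact₃ hX n := hat_exact₃ SS hX n

lemma hat_vanishes : VanishesOnProjectives (hat SS) := by
  intro n P hP
  rw [IsZero.iff_id_eq_zero]
  apply hat_ext_succ SS
  intro k m e
  exact (SS.vanish k m P hP).eq_of_src _ _

lemma idx_zero (n : ℤ) : n = n + ((0 : ℕ) : ℤ) := by simp

lemma functor_map_eqToHom {F G : C ⥤ D} (h : F = G) {M N : C} (f : M ⟶ N) :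
    F.map f ≫ eqToHom (congrArg (fun F : C ⥤ D => F.obj N) h) =
      eqToHom (congrArg (fun F : C ⥤ D => F.obj M) h) ≫ G.map f := by
  subst h; simp

/-- The canonical morphism to the satellite functor construction. -/
noncomputable def hatν : CohomHom T (hat SS) where
  app n :=
    { app := fun M => eqToHom (congrArg (fun F : C ⥤ D => F.obj M) (SS.S_zero n).symm) ≫
        hatι SS n M 0 n (idx_zero n)
      naturality := fun M N f => by
        change _ = _ ≫ (hatT SS n).map f
        rw [Category.assoc, hatι_natural, ← Category.assoc, ← Category.assoc,
          functor_map_eqToHom (SS.S_zero n).symm] }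
  comm {X} hX n := by
    change (_ ≫ _) ≫ hatδ SS hX n = _
    rw [SS.δ_fac hX n]
    rw [← Sδbar_hatι SS n X.X₃ 0 n (idx_zero n) (by simp)]
    simp only [Category.assoc]
    rw [hatι_hatδ, eqToHom_trans_assoc, eqToHom_refl, Category.id_comp]

end Construction

/-! ### The universal property -/

section Universal

variable {U : CohomFunctor C D} (hU : VanishesOnProjectives U)

lemma mono_δ {U : CohomFunctor C D} (hU : VanishesOnProjectives U)
    {X : ShortComplex C} (hX : X.ShortExact) [hp : Projective X.X₂] (n : ℤ) :
    Mono (U.δ hX n) :=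
  (U.exact₂ hX n).mono_g ((hU n _ hp).eq_of_src _ _)

lemma isIso_δ {U : CohomFunctor C D} (hU : VanishesOnProjectives U)
    {X : ShortComplex C} (hX : X.ShortExact) [hp : Projective X.X₂] (n : ℤ) :
    IsIso (U.δ hX n) := by
  have := mono_δ hU hX n
  have : Epi (U.δ hX n) := (U.exact₃ hX n).epi_f ((hU (n + 1) _ hp).eq_of_tgt _ _)
  exact isIso_of_mono_of_epi _

variable [EnoughProjectives C] (SS : SatelliteSystem T)

/-- The raw components of the inductive step. -/
noncomputable def stepApp (k : ℕ)
    (ψ : ∀ m n : ℤ, m = n + (k : ℤ) → (SS.S k m ⟶ U.T n)) (m n : ℤ)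
    (h : m = n + ((k + 1 : ℕ) : ℤ)) (M : C) : (SS.S (k + 1) m).obj M ⟶ (U.T n).obj M :=
  SS.ε (pres_shortExact M) k m ≫ (ψ m (n + 1) (idx_shift h)).app _ ≫
    (have := isIso_δ hU (pres_shortExact M) n
     inv (U.δ (pres_shortExact M) n))

lemma stepApp_δ (k : ℕ)
    (ψ : ∀ m n : ℤ, m = n + (k : ℤ) → (SS.S k m ⟶ U.T n)) (m n : ℤ)
    (h : m = n + ((k + 1 : ℕ) : ℤ)) (M : C) {X : ShortComplex C} (hX : X.ShortExact)
    (f : M ⟶ X.X₃) :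
    stepApp hU SS k ψ m n h M ≫ (U.T n).map f ≫ U.δ hX n =
      (SS.S (k + 1) m).map f ≫ SS.ε hX k m ≫ (ψ m (n + 1) (idx_shift h)).app X.X₁ := by
  have := isIso_δ hU (pres_shortExact M) n
  obtain ⟨φ, rfl⟩ := exists_lift (pres_shortExact M) hX f
  rw [U.δ_natural (pres_shortExact M) hX φ n, ← Category.assoc ((SS.S (k + 1) m).map φ.τ₃),
    SS.ε_natural (pres_shortExact M) hX φ]
  dsimp only [stepApp]
  simp

/-- The inductive step. -/
noncomputable def step (k : ℕ)
    (ψ : ∀ m n : ℤ, m = n + (k : ℤ) → (SS.S k m ⟶ U.T n)) (m n : ℤ)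
    (h : m = n + ((k + 1 : ℕ) : ℤ)) : SS.S (k + 1) m ⟶ U.T n where
  app M := stepApp hU SS k ψ m n h M
  naturality M N f := by
    have := mono_δ hU (pres_shortExact N) n
    rw [← cancel_mono (U.δ (pres_shortExact N) n), Category.assoc, Category.assoc,
      stepApp_δ hU SS k ψ m n h M (pres_shortExact N) f]
    have := stepApp_δ hU SS k ψ m n h N (pres_shortExact N) (𝟙 N)
    rw [CategoryTheory.Functor.map_id, CategoryTheory.Functor.map_id, Category.id_comp,
      Category.id_comp] at this
    rw [this]

lemma step_δ (k : ℕ)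
    (ψ : ∀ m n : ℤ, m = n + (k : ℤ) → (SS.S k m ⟶ U.T n)) (m n : ℤ)
    (h : m = n + ((k + 1 : ℕ) : ℤ)) {X : ShortComplex C} (hX : X.ShortExact) :
    (step hU SS k ψ m n h).app X.X₃ ≫ U.δ hX n =
      SS.ε hX k m ≫ (ψ m (n + 1) (idx_shift h)).app X.X₁ := by
  have := stepApp_δ hU SS k ψ m n h X.X₃ hX (𝟙 _)
  rw [CategoryTheory.Functor.map_id, CategoryTheory.Functor.map_id, Category.id_comp,
    Category.id_comp] at this
  exact this

lemma S_zero_idx {m n : ℤ} (h : m = n + ((0 : ℕ) : ℤ)) : SS.S 0 m = T.T n := by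
  rw [SS.S_zero, h]; simp

/-- The morphisms `S^{-k}T^{n+k} ⟶ U^n` induced by `T ⟶ U`. -/
noncomputable def psi (φ : CohomHom T U) :
    ∀ (k : ℕ) (m n : ℤ), m = n + (k : ℤ) → (SS.S k m ⟶ U.T n)
  | 0, _, n, h => eqToHom (S_zero_idx SS h) ≫ φ.app n
  | k + 1, m, n, h => step hU SS k (psi φ k) m n h

lemma psi_δ (φ : CohomHom T U) (k : ℕ) (m n : ℤ) (h : m = n + ((k + 1 : ℕ) : ℤ))
    {X : ShortComplex C} (hX : X.ShortExact) :
    (psi hU SS φ (k + 1) m n h).app X.X₃ ≫ U.δ hX n =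
      SS.ε hX k m ≫ (psi hU SS φ k m (n + 1) (idx_shift h)).app X.X₁ :=
  step_δ hU SS k (psi hU SS φ k) m n h hX

lemma psi_zero_δ (φ : CohomHom T U) (n m : ℤ) (h : m = n + ((0 : ℕ) : ℤ))
    (h' : m + 1 = (n + 1) + ((0 : ℕ) : ℤ))
    {X : ShortComplex C} (hX : X.ShortExact) :
    (psi hU SS φ 0 m n h).app X.X₃ ≫ U.δ hX n =
      (SS.Sδbar 0 m).app X.X₃ ≫ SS.ε hX 0 (m + 1) ≫
        (psi hU SS φ 0 (m + 1) (n + 1) h').app X.X₁ := by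
  obtain rfl : m = n := by simpa using h
  dsimp only [psi]
  rw [NatTrans.comp_app, NatTrans.comp_app, Category.assoc, φ.comm hX m, SS.δ_fac hX m]
  simp [eqToHom_app]

lemma Sδbar_psi (φ : CohomHom T U) (k : ℕ) : ∀ (m n : ℤ) (h : m = n + (k : ℤ))
    (h' : m + 1 = n + ((k + 1 : ℕ) : ℤ)) (M : C),
    (SS.Sδbar k m).app M ≫ (psi hU SS φ (k + 1) (m + 1) n h').app M =
      (psi hU SS φ k m n h).app M := by
  induction k with
  | zero =>
    intro m n h h' M
    have := mono_δ hU (pres_shortExact M) n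
    rw [← cancel_mono (U.δ (pres_shortExact M) n), Category.assoc,
      psi_δ hU SS φ 0 (m + 1) n h' (pres_shortExact M),
      psi_zero_δ hU SS φ n m h (idx_shift h') (pres_shortExact M)]
  | succ k ih =>
    intro m n h h' M
    have := mono_δ hU (pres_shortExact M) n
    rw [← cancel_mono (U.δ (pres_shortExact M) n), Category.assoc,
      psi_δ hU SS φ (k + 1) (m + 1) n h' (pres_shortExact M),
      psi_δ hU SS φ k m n h (pres_shortExact M), ← Category.assoc,
      Sδbar_ε SS (pres_shortExact M) k m, Category.assoc, ih m (n + 1) (idx_shift h)]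

variable [HasColimitsOfShape ℕ D] [PreservesFiniteLimits (colim : (ℕ ⥤ D) ⥤ D)]

/-- The components of the induced morphism from the satellite functor construction. -/
noncomputable def hatPsiApp (φ : CohomHom T U) (n : ℤ) (M : C) :
    (hatT SS n).obj M ⟶ (U.T n).obj M :=
  hatDesc SS (fun k m h => (psi hU SS φ k m n h).app M)
    (fun k m h h' => Sδbar_psi hU SS φ k m n h h' M)

lemma hatι_hatPsiApp (φ : CohomHom T U) (n : ℤ) (M : C) (k : ℕ) (m : ℤ)
    (h : m = n + (k : ℤ)) :
    hatι SS n M k m h ≫ hatPsiApp hU SS φ n M = (psi hU SS φ k m n h).app M :=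
  hatι_desc SS _ _ k m h

/-- The induced morphism from the satellite functor construction. -/
noncomputable def hatPsi (φ : CohomHom T U) : CohomHom (hat SS) U where
  app n :=
    { app := fun M => hatPsiApp hU SS φ n M
      naturality := fun M N f => by
        apply hat_ext SS
        intro k m e
        change _ ≫ (hatT SS n).map f ≫ _ = _
        rw [← Category.assoc, hatι_natural, Category.assoc, hatι_hatPsiApp, ← Category.assoc,
          hatι_hatPsiApp, NatTrans.naturality] }
  comm {X} hX n := by
    apply hat_ext_succ SS
    intro k m e
    change _ ≫ hatPsiApp hU SS φ n _ ≫ _ = _ ≫ hatδ SS hX n ≫ hatPsiApp hU SS φ (n + 1) _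
    rw [← Category.assoc, hatι_hatPsiApp, ← Category.assoc, hatι_hatδ, Category.assoc,
      hatι_hatPsiApp, psi_δ]

lemma CohomHom.ext' {V W : CohomFunctor C D} {f g : CohomHom V W}
    (h : ∀ n M, (f.app n).app M = (g.app n).app M) : f = g := by
  have : f.app = g.app := by
    funext n
    ext M
    exact h n M
  cases f; cases g
  simp only at this
  subst this
  rfl

lemma hatν_hatPsi (φ : CohomHom T U) : (hatν SS).comp (hatPsi hU SS φ) = φ := by
  apply CohomHom.ext'
  intro n M
  change (eqToHom _ ≫ hatι SS n M 0 n (idx_zero n)) ≫ hatPsiApp hU SS φ n M = _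
  rw [Category.assoc, hatι_hatPsiApp]
  dsimp only [psi]
  simp [eqToHom_app]

lemma hat_unique {U : CohomFunctor C D} (hU : VanishesOnProjectives U)
    (SS : SatelliteSystem T) (ψ₁ ψ₂ : CohomHom (hat SS) U)
    (h : (hatν SS).comp ψ₁ = (hatν SS).comp ψ₂) : ψ₁ = ψ₂ := by
  have key : ∀ (k : ℕ) (n : ℤ) (M : C) (m : ℤ) (e : m = n + (k : ℤ)),
      hatι SS n M k m e ≫ (ψ₁.app n).app M = hatι SS n M k m e ≫ (ψ₂.app n).app M := by
    intro k
    induction k with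
    | zero =>
      intro n M m e
      obtain rfl : m = n := by simpa using e
      have h' : ((hatν SS).comp ψ₁).app m = ((hatν SS).comp ψ₂).app m := by rw [h]
      have h'' := congrArg (fun t => NatTrans.app t M) h'
      change (eqToHom _ ≫ hatι SS m M 0 m (idx_zero m)) ≫ (ψ₁.app m).app M =
        (eqToHom _ ≫ hatι SS m M 0 m (idx_zero m)) ≫ (ψ₂.app m).app M at h''
      rw [Category.assoc, Category.assoc, cancel_epi] at h''
      exact h''
    | succ k ih =>
      intro n M m e
      have := mono_δ hU (pres_shortExact M) n
      have aux : ∀ ψ : CohomHom (hat SS) U,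
          (hatι SS n M (k + 1) m e ≫ (ψ.app n).app M) ≫ U.δ (pres_shortExact M) n =
          SS.ε (pres_shortExact M) k m ≫
            hatι SS (n + 1) (pres M).X₁ k m (idx_shift e) ≫ (ψ.app (n + 1)).app _ := by
        intro ψ
        have c : (ψ.app n).app M ≫ U.δ (pres_shortExact M) n =
          hatδ SS (pres_shortExact M) n ≫ (ψ.app (n + 1)).app (pres M).X₁ :=
          ψ.comm (pres_shortExact M) n
        have c' := hatι_hatδ SS (pres_shortExact M) n k m e
        calc _ = hatι SS n M (k + 1) m e ≫ (ψ.app n).app M ≫ U.δ (pres_shortExact M) n :=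
              Category.assoc _ _ _
          _ = hatι SS n M (k + 1) m e ≫ hatδ SS (pres_shortExact M) n ≫
              (ψ.app (n + 1)).app (pres M).X₁ := by rw [c]
          _ = _ := by
              refine (Category.assoc _ _ _).symm.trans ?_
              refine Eq.trans ?_ (Category.assoc _ _ _)
              exact congrArg (fun t => t ≫ (ψ.app (n + 1)).app (pres M).X₁) c'
      rw [← cancel_mono (U.δ (pres_shortExact M) n), aux, aux, ih]
  apply CohomHom.ext'
  intro n M
  exact hat_ext SS (fun k m e => key k n M m e)

lemma hat_isMislinCompletion : IsMislinCompletion T (hat SS) (hatν SS) where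
  vanishes := hat_vanishes SS
  factors U hU φ := ⟨hatPsi hU SS φ, hatν_hatPsi hU SS φ, fun ψ hψ =>
    hat_unique hU SS _ _ (hψ.trans (hatν_hatPsi hU SS φ).symm)⟩

end Universal

end Helpers

/-- Theorem 3.6. For a short exact sequence `0 → A → B → C → 0` in `C` the
squares relating the satellite connecting homomorphisms `ε^{-k}` and `ε^{-k-1}` over the
transition morphisms `S^{-k}δ̲` commute, and the `n`-th connecting homomorphism of the
satellite functor construction is `δ̂^n = colim_{k ∈ ℕ} ε^{-k} : T̂^n(C) ⟶ T̂^{n+1}(A)`.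
(In particular `δ̲^n : T^n → S^{-1}T^{n+1}` is a natural transformation, which is encoded
here by `Sδbar` being a natural transformation.) -/
theorem satellite_connecting_homomorphisms
    {C : Type u} [Category.{v} C] [Abelian C] [EnoughProjectives C]
    {D : Type u'} [Category.{v'} D] [Abelian D]
    [HasColimitsOfShape ℕ D] [PreservesFiniteLimits (colim : (ℕ ⥤ D) ⥤ D)]
    (T : CohomFunctor C D) (SS : SatelliteSystem T) :
    (∀ {X : ShortComplex C} (hX : X.ShortExact) (k : ℕ) (m : ℤ),
      (SS.Sδbar (k + 1) m).app X.X₃ ≫ SS.ε hX (k + 1) (m + 1) =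
        SS.ε hX k m ≫ (SS.Sδbar k m).app X.X₁) ∧
    (∃ (That : CohomFunctor C D) (ν : CohomHom T That)
      (ι : ∀ (n : ℤ) (M : C) (k : ℕ), SS.obj n M k ⟶ (That.T n).obj M),
      IsMislinCompletion T That ν ∧
      (∀ (n : ℤ) (M : C), IsDirectLimit (SS.map n M) ((That.T n).obj M) (ι n M)) ∧
      (∀ (n : ℤ) (M : C), (ν.app n).app M = eqToHom (obj_zero_eq SS n M) ≫ ι n M 0) ∧
      (∀ {X : ShortComplex C} (hX : X.ShortExact) (n : ℤ) (k : ℕ),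
        ι n X.X₃ (k + 1) ≫ That.δ hX n =
          SS.ε hX k (n + ((k + 1 : ℕ) : ℤ)) ≫
            eqToHom (congrArg (fun m : ℤ => (SS.S k m).obj X.X₁)
              (show n + ((k + 1 : ℕ) : ℤ) = (n + 1) + (k : ℤ) by push_cast; ring)) ≫
            ι (n + 1) X.X₁ k)) := by
  refine ⟨fun hX k m => Sδbar_ε SS hX k m, hat SS, hatν SS,
    fun n M k => hatι SS n M k (n + (k : ℤ)) rfl, hat_isMislinCompletion SS,
    fun n M => hat_isDirectLimit SS n M, fun n M => ?_, fun {X} hX n k => ?_⟩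
  · change eqToHom _ ≫ hatι SS n M 0 n (idx_zero n) = _
    rw [← eqToHom_hatι SS n M 0 (idx_zero n) rfl
      (congrArg (fun m : ℤ => (SS.S 0 m).obj M) (idx_zero n)), eqToHom_trans_assoc]
    rfl
  · have h := hatι₀_hatδ SS hX n k
    dsimp only [εs] at h
    rw [Category.assoc] at h
    exact h

end Mislin
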